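/- Let (α,β,γ,δ) be an admissible and nondegenerate quadruple. Then for every N ≥ 1 and every integer i with 0 ≤ i ≤ 2N−2, the sum Σ_{x ∈ Λ} w_N(x) |x|^i is finite. Consequently the normalizing constant Z_N = Σ_{X ∈ 𝔾_N} ∏_{i=1}^N w_N(x_i) · ∏_{1≤i<j≤N}(x_j − x_i)² is finite, so that M_N is a well-defined probability measure on 𝔾_N. -/

import Mathlib

open scoped BigOperators
open Classical

noncomputable section

/-- The double q-lattice Λ = {ζ₋ qᵐ} ∪ {ζ₊ qⁿ}. -/
def Lambda (q zm zp : ℝ) : Set ℝ :=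
  {x | ∃ m : ℤ, x = zm * q ^ m} ∪ {x | ∃ n : ℤ, x = zp * q ^ n}

/-- The interval I(a,b) of the double q-lattice. -/
def qInterval (q zm zp a b : ℝ) : Set ℝ :=
  if b < 0 then Set.Ico a b ∩ Lambda q zm zp
  else if a < 0 then Set.Icc a b ∩ Lambda q zm zp
  else Set.Ioc a b ∩ Lambda q zm zp

/-- N-point configurations on the lattice. -/
def Conf (q zm zp : ℝ) (N : ℕ) : Type :=
  {x : Fin N → ℝ // StrictMono x ∧ ∀ i, x i ∈ Lambda q zm zp}

/-- Interlacement Y ≺ X. -/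
def Interlaces (q zm zp : ℝ) {N : ℕ} (Y : Conf q zm zp N) (X : Conf q zm zp (N+1)) : Prop :=
  ∀ i : Fin N, Y.1 i ∈ qInterval q zm zp (X.1 i.castSucc) (X.1 i.succ)

/-- Vandermonde-type product ∏_{i<j} (x_j - x_i). -/
def vprod {N : ℕ} (x : Fin N → ℝ) : ℝ :=
  ∏ p ∈ Finset.univ.filter (fun p : Fin N × Fin N => p.1 < p.2), (x p.2 - x p.1)

/-- finite q-Pochhammer symbol (a;q)_n, real version. -/
def qpochR (a q : ℝ) (n : ℕ) : ℝ := ∏ m ∈ Finset.range n, (1 - a * q ^ m)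

/-- The q-link Λ^{N+1}_N. -/
def qlink (q zm zp : ℝ) (N : ℕ) (X : Conf q zm zp (N+1)) (Y : Conf q zm zp N) : ℝ :=
  if Interlaces q zm zp Y X then
    (∏ i, |Y.1 i|) * qpochR q q N * vprod Y.1 / vprod X.1
  else 0


/-- finite q-Pochhammer symbol (a;q)_n in ℂ. -/
def qpochC (a : ℂ) (q : ℝ) (n : ℕ) : ℂ := ∏ m ∈ Finset.range n, (1 - a * (q : ℂ) ^ m)

/-- infinite q-Pochhammer symbol (a;q)_∞ in ℂ. -/
def qpochInf (a : ℂ) (q : ℝ) : ℂ := ∏' m : ℕ, (1 - a * (q : ℂ) ^ m)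

/-- theta function θ_q(u) = (u;q)_∞ (q/u;q)_∞. -/
def thetaQ (q : ℝ) (u : ℂ) : ℂ := qpochInf u q * qpochInf ((q : ℂ) / u) q

/-- admissible pair of parameters. -/
def AdmissiblePair (q zm zp : ℝ) (a b : ℂ) : Prop :=
  a ≠ 0 ∧ b ≠ 0 ∧
    ((a.im ≠ 0 ∧ b = (starRingEnd ℂ) a) ∨
     (a.im = 0 ∧ b.im = 0 ∧
       ∃ s t : ℝ, s ∈ Lambda q zm zp ∧ t ∈ Lambda q zm zp ∧ s < t ∧
         (∀ u ∈ Lambda q zm zp, ¬ (s < u ∧ u < t)) ∧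
         a⁻¹.re ∈ Set.Ioo s t ∧ b⁻¹.re ∈ Set.Ioo s t))

/-- admissible nondegenerate quadruple: (α,β), (γ,δ) admissible pairs and γδq > αβ. -/
def AdmissibleNondeg (q zm zp : ℝ) (al be ga de : ℂ) : Prop :=
  AdmissiblePair q zm zp al be ∧ AdmissiblePair q zm zp ga de ∧
    (al * be).re < (ga * de).re * q

/-- the weight w(x; a,b,c,d) = |x| (ax;q)_∞(bx;q)_∞ / ((cx;q)_∞(dx;q)_∞). -/
def weightC (q : ℝ) (a b c d : ℂ) (x : ℝ) : ℂ :=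
  (|x| : ℝ) * (qpochInf (a * x) q * qpochInf (b * x) q) /
    (qpochInf (c * x) q * qpochInf (d * x) q)

/-- pseudo big q-Jacobi polynomial P_n(x; a,b,c,d). -/
def pbqJ (q : ℝ) (a b c d : ℂ) (n : ℕ) (x : ℂ) : ℂ :=
  ∑ k ∈ Finset.range (n + 1),
    qpochC ((q : ℂ) ^ (-(n : ℤ))) q k * qpochC (c * d * (q : ℂ) ^ ((n : ℤ) + 1) / (a * b)) q k *
        qpochC (c * x) q k /
      (qpochC (c * (q : ℂ) / b) q k * qpochC (c * (q : ℂ) / a) q k * qpochC (q : ℂ) q k) *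
      (q : ℂ) ^ k

/-- leading coefficient k_n(a,b,c,d) of P_n. -/
def kCoeff (q : ℝ) (a b c d : ℂ) (n : ℕ) : ℂ :=
  c ^ n * qpochC (c * d * (q : ℂ) ^ ((n : ℤ) + 1) / (a * b)) q n /
    (qpochC (c * (q : ℂ) / b) q n * qpochC (c * (q : ℂ) / a) q n)

/-- the q-hypergeometric series ₂φ₁(A,B;C;q,Z). -/
def phi21 (q : ℝ) (A B C Z : ℂ) : ℂ :=
  ∑' m : ℕ, qpochC A q m * qpochC B q m / (qpochC C q m * qpochC (q : ℂ) q m) * Z ^ m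

/-- principal branch square root. -/
def csqrt (z : ℂ) : ℂ := z ^ (1 / 2 : ℂ)


/-- the weight w_N of the q-zw-measure, with parameters (α,β,γq^{1−N},δq^{1−N}). -/
def wN (q : ℝ) (al be ga de : ℂ) (N : ℕ) (x : ℝ) : ℂ :=
  weightC q al be (ga * (q : ℂ) ^ (1 - (N : ℤ))) (de * (q : ℂ) ^ (1 - (N : ℤ))) x

/-- unnormalized q-zw-weight of a configuration: ∏ w_N(xᵢ) ∏_{i<j}(x_j−x_i)². -/
def zwUnnorm (q zm zp : ℝ) (al be ga de : ℂ) (N : ℕ) (X : Conf q zm zp N) : ℝ :=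
  (∏ i, (wN q al be ga de N (X.1 i)).re) *
    ∏ p ∈ Finset.univ.filter (fun p : Fin N × Fin N => p.1 < p.2), (X.1 p.2 - X.1 p.1) ^ 2

/-- normalizing constant Z_N. -/
def ZN (q zm zp : ℝ) (al be ga de : ℂ) (N : ℕ) : ℝ :=
  ∑' X : Conf q zm zp N, zwUnnorm q zm zp al be ga de N X

/-- the q-zw-measure M_N on 𝔾_N. -/
def zwM (q zm zp : ℝ) (al be ga de : ℂ) (N : ℕ) (X : Conf q zm zp N) : ℝ :=
  zwUnnorm q zm zp al be ga de N X / ZN q zm zp al be ga de N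


/-!
Writing `w` for the weight with parameters `a, b, c, d`, the functional equation of the infinite
`q`-Pochhammer symbol gives `w (q x) / w x = q (1 - c x) (1 - d x) / ((1 - a x) (1 - b x))`.
Along either geometric progression of `Λ`, the ratio of consecutive terms of `w x * |x| ^ i`
therefore tends to `q ^ (i + 1) < 1` at `0` and, in absolute value, to `q ^ (i + 1) |c d / (a b)|`
at infinity. With `(c, d) = (γ q ^ (1 - N), δ q ^ (1 - N))`, nondegeneracy `γ δ q > α β` makes
the latter exceed `1` for every `i ≤ 2 N - 2`, so the moments converge by the ratio test at both
ends.

Bounding `(x_j - x_i) ^ 2` by `(1 + |x_i|) ^ 2 * (1 + |x_j|) ^ 2`, every point occurs in `N - 1`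
pairs, so the squared Vandermonde product is at most `∏ i, (1 + |x_i|) ^ (2 N - 2)` and the sum over
configurations is dominated by a product of one-point sums, to which the moments apply.
Admissibility makes `(1 - a x) (1 - b x)` positive on `Λ`, hence all factors of the weight pair up
to positive numbers and `Z_N > 0`.
-/

section LatticeSum

open Filter Topology Bornology

variable {K E : Type*} [NormedField K] [NormedAddCommGroup E] [CompleteSpace E]

theorem summable_int_of_ratio_norm_eventually_le {f : ℤ → E} {r s : ℝ} (hr : r < 1) (hs : s < 1)
    (hTop : ∀ᶠ m in atTop, ‖f (m + 1)‖ ≤ r * ‖f m‖)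
    (hBot : ∀ᶠ m in atBot, ‖f m‖ ≤ s * ‖f (m + 1)‖) : Summable f := by
  refine .of_nat_of_neg ?_ ?_
  · refine summable_of_ratio_norm_eventually_le hr ?_
    simpa using tendsto_natCast_atTop_atTop.eventually hTop
  · refine summable_of_ratio_norm_eventually_le hs ?_
    have hneg : Tendsto (fun n : ℕ => -(n : ℤ) - 1) atTop atBot :=
      tendsto_atBot_add_const_right _ _ (tendsto_neg_atTop_atBot.comp tendsto_natCast_atTop_atTop)
    filter_upwards [hneg.eventually hBot] with n hn
    rwa [sub_add_cancel, ← neg_add', ← Nat.cast_succ] at hn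

theorem tendsto_mul_zpow_atTop_nhdsNE_zero {q z : K} (hq0 : q ≠ 0) (hq1 : ‖q‖ < 1) (hz : z ≠ 0) :
    Tendsto (fun m : ℤ => z * q ^ m) atTop (𝓝[≠] 0) := by
  refine tendsto_nhdsWithin_iff.mpr ⟨?_, .of_forall fun m => mul_ne_zero hz (zpow_ne_zero m hq0)⟩
  rw [← Nat.map_cast_int_atTop, tendsto_map'_iff]
  simpa [Function.comp_def] using (tendsto_pow_atTop_nhds_zero_of_norm_lt_one hq1).const_mul z

theorem tendsto_mul_zpow_atBot_cobounded {q z : K} (hq0 : q ≠ 0) (hq1 : ‖q‖ < 1) (hz : z ≠ 0) :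
    Tendsto (fun m : ℤ => z * q ^ m) atBot (cobounded K) := by
  have hinv := tendsto_inv₀_nhdsNE_zero.comp
    ((tendsto_mul_zpow_atTop_nhdsNE_zero hq0 hq1 (inv_ne_zero hz)).comp tendsto_neg_atBot_atTop)
  simpa [Function.comp_def, mul_comm] using hinv

theorem summable_mul_zpow_of_tendsto_ratio {q z : K} (hq0 : q ≠ 0) (hq1 : ‖q‖ < 1) (hz : z ≠ 0)
    {f : K → E} {ρ : K → ℝ} (hf : ∀ m : ℤ, ‖f (z * q ^ m * q)‖ = ρ (z * q ^ m) * ‖f (z * q ^ m)‖)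
    {l L : ℝ} (hl : Tendsto ρ (𝓝[≠] 0) (𝓝 l)) (hl1 : l < 1)
    (hL : Tendsto ρ (cobounded K) (𝓝 L)) (hL1 : 1 < L) :
    Summable fun m : ℤ => f (z * q ^ m) := by
  have hstep (m : ℤ) : ‖f (z * q ^ (m + 1))‖ = ρ (z * q ^ m) * ‖f (z * q ^ m)‖ := by
    rw [zpow_add_one₀ hq0, ← mul_assoc, hf]
  obtain ⟨r, hlr, hr1⟩ := exists_between hl1
  obtain ⟨s, hs1, hsL⟩ := exists_between hL1
  have hs0 : 0 < s := one_pos.trans hs1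
  refine summable_int_of_ratio_norm_eventually_le hr1 (inv_lt_one_of_one_lt₀ hs1) ?_ ?_
  · filter_upwards [(hl.comp (tendsto_mul_zpow_atTop_nhdsNE_zero hq0 hq1 hz)).eventually_le_const
      hlr] with m hm
    rw [hstep]
    exact mul_le_mul_of_nonneg_right hm (norm_nonneg _)
  · filter_upwards [(hL.comp (tendsto_mul_zpow_atBot_cobounded hq0 hq1 hz)).eventually_const_le
      hsL] with m hm
    rw [hstep, le_inv_mul_iff₀ hs0]
    exact mul_le_mul_of_nonneg_right hm (norm_nonneg _)

theorem tendsto_one_sub_mul_div_one_sub_mul_cobounded (a : K) {b : K} (hb : b ≠ 0) :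
    Tendsto (fun x : K => (1 - a * x) / (1 - b * x)) (cobounded K) (𝓝 (a / b)) := by
  have hinv : Tendsto (fun x : K => (x⁻¹ - a) / (x⁻¹ - b)) (cobounded K) (𝓝 (a / b)) := by
    simpa [Pi.div_def] using (tendsto_inv₀_cobounded.sub_const a).div
      (tendsto_inv₀_cobounded.sub_const b) (by simpa using hb)
  refine hinv.congr' ?_
  filter_upwards [eventually_ne_cobounded (0 : K)] with x hx
  rw [← mul_div_mul_right _ _ hx, sub_mul, sub_mul, inv_mul_cancel₀ hx]

end LatticeSum

section PairInteraction

theorem summable_norm_prod_pi {ι R : Type*} [NormedCommRing R] {n : ℕ} {u : Fin n → ι → R}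
    (hu : ∀ i, Summable fun x => ‖u i x‖) : Summable fun X : Fin n → ι => ‖∏ i, u i (X i)‖ := by
  induction n with
  | zero => exact .of_finite
  | succ n ih =>
    rw [← (Fin.consEquiv fun _ => ι).summable_iff]
    simpa [Function.comp_def, Fin.prod_univ_succ, Fin.consEquiv] using
      (hu 0).mul_norm (ih fun i => hu i.succ)

theorem prod_filter_lt_mul {ι M : Type*} [CommMonoid M] [Fintype ι] [LinearOrder ι]
    [LocallyFiniteOrderTop ι] [LocallyFiniteOrderBot ι] (g : ι → M) :
    ∏ p : ι × ι with p.1 < p.2, g p.1 * g p.2 = ∏ i, g i ^ (Fintype.card ι - 1) := by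
  have hoff := Finset.prod_prod_Ioi_mul_eq_prod_prod_off_diag fun _ i : ι => g i
  simp only [Finset.prod_const, Finset.card_compl, Finset.card_singleton] at hoff
  rw [← hoff, Finset.prod_filter, Fintype.prod_prod_type]
  simp only [← Finset.prod_filter, Finset.filter_lt_eq_Ioi]

theorem prod_sub_sq_le {N : ℕ} (x : Fin N → ℝ) :
    ∏ p : Fin N × Fin N with p.1 < p.2, (x p.2 - x p.1) ^ 2 ≤
      ∏ i, (1 + |x i|) ^ (2 * N - 2) := by
  have hsub (u v : ℝ) : (v - u) ^ 2 ≤ (1 + |u|) ^ 2 * (1 + |v|) ^ 2 := by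
    rw [← mul_pow, ← sq_abs (v - u)]
    gcongr
    calc |v - u| ≤ |v| + |u| := abs_sub v u
      _ ≤ (1 + |u|) * (1 + |v|) := by nlinarith [abs_nonneg u, abs_nonneg v]
  calc ∏ p : Fin N × Fin N with p.1 < p.2, (x p.2 - x p.1) ^ 2
      ≤ ∏ p : Fin N × Fin N with p.1 < p.2, (1 + |x p.1|) ^ 2 * (1 + |x p.2|) ^ 2 :=
        Finset.prod_le_prod (fun _ _ => sq_nonneg _) fun _ _ => hsub _ _
    _ = ∏ i, (1 + |x i|) ^ (2 * N - 2) := by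
        rw [prod_filter_lt_mul fun i => (1 + |x i|) ^ 2]
        simp only [← pow_mul, Fintype.card_fin, Nat.mul_sub_one]

theorem summable_mul_one_add_abs_pow {ι : Type*} {ξ w : ι → ℝ} {n : ℕ}
    (hw : ∀ i ≤ n, Summable fun x => w x * |ξ x| ^ i) :
    Summable fun x => w x * (1 + |ξ x|) ^ n := by
  have hsum : Summable fun x => ∑ i ∈ Finset.range (n + 1), n.choose i * (w x * |ξ x| ^ i) :=
    summable_sum fun i hi => (hw i (Finset.mem_range_succ_iff.mp hi)).mul_left _
  refine hsum.congr fun x => ?_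
  rw [add_comm 1, add_pow, Finset.mul_sum]
  exact Finset.sum_congr rfl fun i _ => by ring

theorem summable_prod_mul_prod_sub_sq {ι : Type*} {ξ w : ι → ℝ} {N : ℕ}
    (hw : ∀ i ≤ 2 * N - 2, Summable fun x => w x * |ξ x| ^ i) :
    Summable fun X : Fin N → ι => (∏ i, w (X i)) *
      ∏ p : Fin N × Fin N with p.1 < p.2, (ξ (X p.2) - ξ (X p.1)) ^ 2 := by
  refine .of_norm_bounded
    (summable_norm_prod_pi fun _ => (summable_mul_one_add_abs_pow hw).norm) fun X => ?_
  rw [Finset.prod_mul_distrib, norm_mul, norm_mul]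
  refine mul_le_mul_of_nonneg_left ?_ (norm_nonneg _)
  rw [Real.norm_of_nonneg (Finset.prod_nonneg fun _ _ => sq_nonneg _)]
  exact (prod_sub_sq_le fun i => ξ (X i)).trans (Real.le_norm_self _)

end PairInteraction

section QLattice

variable {q zm zp : ℝ}

theorem mul_zpow_mem_Lambda (hq0 : q ≠ 0) {x : ℝ} (hx : x ∈ Lambda q zm zp) (k : ℤ) :
    x * q ^ k ∈ Lambda q zm zp := by
  rcases hx with ⟨m, rfl⟩ | ⟨m, rfl⟩
  · exact .inl ⟨m + k, by rw [zpow_add₀ hq0, mul_assoc]⟩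
  · exact .inr ⟨m + k, by rw [zpow_add₀ hq0, mul_assoc]⟩

theorem ne_zero_of_mem_Lambda (hq0 : q ≠ 0) (hzm : zm ≠ 0) (hzp : zp ≠ 0) {x : ℝ}
    (hx : x ∈ Lambda q zm zp) : x ≠ 0 := by
  rcases hx with ⟨m, rfl⟩ | ⟨m, rfl⟩
  · exact mul_ne_zero hzm (zpow_ne_zero m hq0)
  · exact mul_ne_zero hzp (zpow_ne_zero m hq0)

theorem exists_mem_Lambda_Ioo_zero (hq0 : 0 < q) (hq1 : q < 1) (hzp : 0 < zp) {t : ℝ}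
    (ht : 0 < t) : ∃ u ∈ Lambda q zm zp, u ∈ Set.Ioo 0 t := by
  obtain ⟨n, hn⟩ := exists_pow_lt_of_lt_one (div_pos ht hzp) hq1
  refine ⟨zp * q ^ (n : ℤ), .inr ⟨n, rfl⟩, by positivity, ?_⟩
  rwa [zpow_natCast, mul_comm, ← lt_div_iff₀ hzp]

theorem summable_Lambda {E : Type*} [NormedAddCommGroup E] [CompleteSpace E] {f : ℝ → E}
    (hm : Summable fun m : ℤ => f (zm * q ^ m)) (hp : Summable fun m : ℤ => f (zp * q ^ m)) :
    Summable fun x : Lambda q zm zp => f x := by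
  let e : ℤ ⊕ ℤ → Lambda q zm zp :=
    Sum.elim (fun m => ⟨zm * q ^ m, .inl ⟨m, rfl⟩⟩) fun m => ⟨zp * q ^ m, .inr ⟨m, rfl⟩⟩
  have he : Function.Surjective e := by
    rintro ⟨_, ⟨m, rfl⟩ | ⟨m, rfl⟩⟩
    exacts [⟨.inl m, rfl⟩, ⟨.inr m, rfl⟩]
  have hfe : Summable fun i => f (e i) := .sum _ hm hp
  refine (hfe.comp_injective (Function.injective_surjInv he)).congr fun x => ?_
  simp only [Function.comp_apply, Function.surjInv_eq he]

end QLattice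

theorem sub_mul_sub_pos_of_mem_Ioo {R : Type*} [CommRing R] [LinearOrder R]
    [IsStrictOrderedRing R] {s t u v x : R} (hu : u ∈ Set.Ioo s t) (hv : v ∈ Set.Ioo s t)
    (hx : x ∉ Set.Ioo s t) : 0 < (u - x) * (v - x) := by
  rcases le_or_gt x s with hxs | hsx
  · exact mul_pos (sub_pos.mpr (hxs.trans_lt hu.1)) (sub_pos.mpr (hxs.trans_lt hv.1))
  · have htx : t ≤ x := not_lt.mp fun hxt => hx ⟨hsx, hxt⟩
    exact mul_pos_of_neg_of_neg (sub_neg.mpr (hu.2.trans_le htx)) (sub_neg.mpr (hv.2.trans_le htx))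

namespace AdmissiblePair

open scoped ComplexOrder

variable {q zm zp : ℝ} {a b : ℂ}

-- Both zeros lie in one gap of `Λ` or are complex conjugates. The accumulation point `0` of `Λ`
-- is included so that `x = 0` yields `0 < a * b`.
theorem inv_sub_mul_inv_sub_pos (h : AdmissiblePair q zm zp a b) (hq0 : 0 < q) (hq1 : q < 1)
    (hzp : 0 < zp) {x : ℝ} (hx : x ∈ insert 0 (Lambda q zm zp)) :
    0 < (a⁻¹ - x) * (b⁻¹ - x) := by
  obtain ⟨ha, hb, ⟨him, rfl⟩ | ⟨ha_im, hb_im, s, t, -, -, -, hgap, hast, hbst⟩⟩ := h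
  · have hax : a⁻¹ - x ≠ 0 := fun h0 => by
      have him0 := congrArg Complex.im h0
      simp [him, ha] at him0
    have hconj : (starRingEnd ℂ a)⁻¹ - x = starRingEnd ℂ (a⁻¹ - x) := by simp
    rw [hconj, Complex.mul_conj]
    exact_mod_cast Complex.normSq_pos.mpr hax
  · lift a to ℝ using ha_im
    lift b to ℝ using hb_im
    have hxst : x ∉ Set.Ioo s t := by
      rcases hx with rfl | hx
      · intro h0
        obtain ⟨u, hu, hu0, hut⟩ := exists_mem_Lambda_Ioo_zero (zm := zm) hq0 hq1 hzp h0.2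
        exact hgap u hu ⟨h0.1.trans hu0, hut⟩
      · exact hgap x hx
    rw [← Complex.ofReal_inv, Complex.ofReal_re] at hast hbst
    exact_mod_cast sub_mul_sub_pos_of_mem_Ioo hast hbst hxst

theorem mul_pos (h : AdmissiblePair q zm zp a b) (hq0 : 0 < q) (hq1 : q < 1) (hzp : 0 < zp) :
    0 < a * b := by
  have hinv : 0 < (a * b)⁻¹ := by
    simpa [mul_comm] using h.inv_sub_mul_inv_sub_pos hq0 hq1 hzp (Set.mem_insert 0 _)
  exact inv_pos.mp hinv

theorem one_sub_mul_one_sub_pos (h : AdmissiblePair q zm zp a b) (hq0 : 0 < q) (hq1 : q < 1)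
    (hzp : 0 < zp) {x : ℝ} (hx : x ∈ Lambda q zm zp) : 0 < (1 - a * x) * (1 - b * x) := by
  have hfactor : (1 - a * x) * (1 - b * x) = a * b * ((a⁻¹ - x) * (b⁻¹ - x)) := by
    have ha := h.1
    have hb := h.2.1
    field_simp
  rw [hfactor]
  exact _root_.mul_pos (h.mul_pos hq0 hq1 hzp)
    (h.inv_sub_mul_inv_sub_pos hq0 hq1 hzp (Set.mem_insert_of_mem 0 hx))

theorem one_sub_mul_zpow_pos (h : AdmissiblePair q zm zp a b) (hq0 : 0 < q) (hq1 : q < 1)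
    (hzp : 0 < zp) (k : ℤ) {x : ℝ} (hx : x ∈ Lambda q zm zp) :
    0 < (1 - a * (q : ℂ) ^ k * x) * (1 - b * (q : ℂ) ^ k * x) := by
  simpa [mul_assoc, mul_comm (x : ℂ)] using
    h.one_sub_mul_one_sub_pos hq0 hq1 hzp (mul_zpow_mem_Lambda hq0.ne' hx k)

end AdmissiblePair

section QPochhammer

open scoped ComplexOrder

variable {q : ℝ}

theorem summable_norm_mul_pow (hq : |q| < 1) (a : ℂ) : Summable fun m : ℕ => ‖a * (q : ℂ) ^ m‖ := by
  simpa only [norm_mul, norm_pow, Complex.norm_real, Real.norm_eq_abs] using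
    (summable_geometric_of_lt_one (abs_nonneg q) hq).mul_left ‖a‖

theorem multipliable_one_sub_mul_pow (hq : |q| < 1) (a : ℂ) :
    Multipliable fun m : ℕ => 1 - a * (q : ℂ) ^ m := by
  simpa only [sub_eq_add_neg] using
    multipliable_one_add_of_summable (f := fun m : ℕ => -(a * (q : ℂ) ^ m))
      (by simpa only [norm_neg] using summable_norm_mul_pow hq a)

theorem qpochInf_eq_one_sub_mul (hq : |q| < 1) (a : ℂ) :
    qpochInf a q = (1 - a) * qpochInf (a * q) q := by
  have hshift (m : ℕ) : 1 - a * (q : ℂ) ^ (m + 1) = 1 - a * q * (q : ℂ) ^ m := by ring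
  rw [qpochInf, tprod_eq_zero_mul'] <;> simp only [hshift]
  · simp [qpochInf]
  · exact multipliable_one_sub_mul_pow hq _

theorem qpochInf_ne_zero (hq : |q| < 1) {a : ℂ} (ha : ∀ m : ℕ, 1 - a * (q : ℂ) ^ m ≠ 0) :
    qpochInf a q ≠ 0 := by
  simpa only [qpochInf, sub_eq_add_neg] using
    tprod_one_add_ne_zero_of_summable (f := fun m : ℕ => -(a * (q : ℂ) ^ m))
      (by simpa only [← sub_eq_add_neg] using ha)
      (by simpa only [norm_neg] using summable_norm_mul_pow hq a)

theorem qpochInf_mul_qpochInf_pos (hq : |q| < 1) {a b : ℂ}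
    (hab : ∀ m : ℕ, 0 < (1 - a * (q : ℂ) ^ m) * (1 - b * (q : ℂ) ^ m)) :
    0 < qpochInf a q * qpochInf b q := by
  refine lt_of_le_of_ne ?_ (mul_ne_zero
    (qpochInf_ne_zero hq fun m => left_ne_zero_of_mul (hab m).ne')
    (qpochInf_ne_zero hq fun m => right_ne_zero_of_mul (hab m).ne')).symm
  rw [qpochInf, qpochInf, ← (multipliable_one_sub_mul_pow hq a).tprod_mul
    (multipliable_one_sub_mul_pow hq b)]
  exact tprod_nonneg fun m => (hab m).le

end QPochhammer

section Weight

open Filter Topology Bornology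
open scoped ComplexOrder

variable {q zm zp : ℝ} {a b c d : ℂ}

theorem weightC_pos (hq0 : q ≠ 0) (hq : |q| < 1) (hzm : zm ≠ 0) (hzp : zp ≠ 0)
    (hab : ∀ x : ℝ, x ∈ Lambda q zm zp → 0 < (1 - a * x) * (1 - b * x))
    (hcd : ∀ x : ℝ, x ∈ Lambda q zm zp → 0 < (1 - c * x) * (1 - d * x))
    {x : ℝ} (hx : x ∈ Lambda q zm zp) : 0 < weightC q a b c d x := by
  have hpos {u v : ℂ} (huv : ∀ y : ℝ, y ∈ Lambda q zm zp → 0 < (1 - u * y) * (1 - v * y)) :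
      0 < qpochInf (u * x) q * qpochInf (v * x) q :=
    qpochInf_mul_qpochInf_pos hq fun m => by
      simpa [mul_assoc] using huv _ (mul_zpow_mem_Lambda hq0 hx m)
  have habs : (0 : ℂ) < (|x| : ℝ) := by
    exact_mod_cast abs_pos.mpr (ne_zero_of_mem_Lambda hq0 hzm hzp hx)
  exact div_pos (mul_pos habs (hpos hab)) (hpos hcd)

theorem weightC_mul_q (hq0 : 0 < q) (hq1 : q < 1) {x : ℝ}
    (hab : (1 - a * x) * (1 - b * x) ≠ 0) (hcd : (1 - c * x) * (1 - d * x) ≠ 0) :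
    weightC q a b c d (x * q) =
      q * ((1 - c * x) / (1 - a * x) * ((1 - d * x) / (1 - b * x))) * weightC q a b c d x := by
  have hq : |q| < 1 := by rwa [abs_of_pos hq0]
  have ha := left_ne_zero_of_mul hab
  have hb := right_ne_zero_of_mul hab
  have hc := left_ne_zero_of_mul hcd
  have hd := right_ne_zero_of_mul hcd
  have hstep (u : ℂ) : qpochInf (u * x) q = (1 - u * x) * qpochInf (u * (x * q : ℝ)) q := by
    rw [qpochInf_eq_one_sub_mul hq, Complex.ofReal_mul, mul_assoc]
  simp only [weightC, hstep, abs_mul, abs_of_pos hq0, Complex.ofReal_mul |x|]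
  field_simp

theorem summable_weightC_mul_abs_pow (hq0 : 0 < q) (hq1 : q < 1) (hzm : zm ≠ 0) (hzp : zp ≠ 0)
    (hab0 : a * b ≠ 0)
    (hab : ∀ x : ℝ, x ∈ Lambda q zm zp → (1 - a * x) * (1 - b * x) ≠ 0)
    (hcd : ∀ x : ℝ, x ∈ Lambda q zm zp → (1 - c * x) * (1 - d * x) ≠ 0)
    {k : ℕ} (hk : ‖a * b‖ < ‖c * d‖ * q ^ (k + 1)) :
    Summable fun x : Lambda q zm zp => weightC q a b c d x * ((|(x : ℝ)| ^ k : ℝ) : ℂ) := by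
  let f : ℝ → ℂ := fun x => weightC q a b c d x * ((|x| ^ k : ℝ) : ℂ)
  let ρ : ℝ → ℝ := fun x =>
    q ^ (k + 1) * ‖(1 - c * x) / (1 - a * x) * ((1 - d * x) / (1 - b * x))‖
  have hstep (x : ℝ) (hx : x ∈ Lambda q zm zp) : ‖f (x * q)‖ = ρ x * ‖f x‖ := by
    simp only [f, ρ, weightC_mul_q hq0 hq1 (hab x hx) (hcd x hx), norm_mul, norm_pow,
      Complex.norm_real, abs_mul, Real.norm_eq_abs, abs_abs, abs_of_pos hq0]
    ring
  have hzero : Tendsto ρ (𝓝[≠] 0) (𝓝 (q ^ (k + 1))) := by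
    have hcont : ContinuousAt ρ 0 := by
      refine .mul continuousAt_const (.norm (.mul (.div ?_ ?_ ?_) (.div ?_ ?_ ?_)))
      all_goals first | fun_prop | simp
    simpa [ρ] using hcont.tendsto.mono_left nhdsWithin_le_nhds
  have hinf : Tendsto ρ (cobounded ℝ) (𝓝 (q ^ (k + 1) * ‖c / a * (d / b)‖)) := by
    have ha := tendsto_one_sub_mul_div_one_sub_mul_cobounded c (left_ne_zero_of_mul hab0)
    have hb := tendsto_one_sub_mul_div_one_sub_mul_cobounded d (right_ne_zero_of_mul hab0)
    exact (((ha.mul hb).comp (RCLike.tendsto_ofReal_cobounded_cobounded ℂ)).norm).const_mul _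
  have hlim : 1 < q ^ (k + 1) * ‖c / a * (d / b)‖ := by
    rw [div_mul_div_comm, norm_div, ← mul_div_assoc, one_lt_div (norm_pos_iff.mpr hab0)]
    linarith
  have hq : ‖q‖ < 1 := by rwa [Real.norm_of_nonneg hq0.le]
  have hpow : q ^ (k + 1) < 1 := pow_lt_one₀ hq0.le hq1 k.succ_ne_zero
  refine summable_Lambda (f := f) ?_ ?_
  · exact summable_mul_zpow_of_tendsto_ratio (ρ := ρ) hq0.ne' hq hzm
      (fun m => hstep _ (.inl ⟨m, rfl⟩)) hzero hpow hinf hlim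
  · exact summable_mul_zpow_of_tendsto_ratio (ρ := ρ) hq0.ne' hq hzp
      (fun m => hstep _ (.inr ⟨m, rfl⟩)) hzero hpow hinf hlim

end Weight

namespace AdmissibleNondeg

open scoped ComplexOrder

variable {q zm zp : ℝ} {al be ga de : ℂ}

theorem wN_pos (h : AdmissibleNondeg q zm zp al be ga de) (hq0 : 0 < q) (hq1 : q < 1)
    (hzm : zm ≠ 0) (hzp : 0 < zp) (N : ℕ) {x : ℝ} (hx : x ∈ Lambda q zm zp) :
    0 < wN q al be ga de N x :=
  weightC_pos hq0.ne' (by rwa [abs_of_pos hq0]) hzm hzp.ne'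
    (fun _ => h.1.one_sub_mul_one_sub_pos hq0 hq1 hzp)
    (fun _ => h.2.1.one_sub_mul_zpow_pos hq0 hq1 hzp (1 - N)) hx

theorem norm_mul_lt (h : AdmissibleNondeg q zm zp al be ga de) (hq0 : 0 < q) (hq1 : q < 1)
    (hzp : 0 < zp) : ‖al * be‖ < ‖ga * de‖ * q := by
  have hre {z : ℂ} (hz : 0 < z) : ‖z‖ = z.re := by
    rw [← Complex.ofReal_re ‖z‖, Complex.norm_of_nonneg' hz.le]
  rw [hre (h.1.mul_pos hq0 hq1 hzp), hre (h.2.1.mul_pos hq0 hq1 hzp)]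
  exact h.2.2

theorem summable_wN_mul_abs_pow (h : AdmissibleNondeg q zm zp al be ga de) (hq0 : 0 < q)
    (hq1 : q < 1) (hzm : zm ≠ 0) (hzp : 0 < zp) {N i : ℕ} (hi : i + 2 ≤ 2 * N) :
    Summable fun x : Lambda q zm zp => (wN q al be ga de N x).re * |(x : ℝ)| ^ i := by
  have hexp : q ≤ (q ^ (1 - N : ℤ)) ^ 2 * q ^ (i + 1) := by
    calc q = q ^ (1 : ℤ) := (zpow_one q).symm
      _ ≤ q ^ ((1 - N : ℤ) * (2 : ℕ) + (i + 1 : ℕ)) :=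
        zpow_le_zpow_right_of_le_one₀ hq0 hq1.le (by lia)
      _ = (q ^ (1 - N : ℤ)) ^ 2 * q ^ (i + 1) := by
        rw [zpow_add₀ hq0.ne', zpow_mul, zpow_natCast, zpow_natCast]
  have hcd : ‖al * be‖ <
      ‖ga * (q : ℂ) ^ (1 - N : ℤ) * (de * (q : ℂ) ^ (1 - N : ℤ))‖ * q ^ (i + 1) :=
    calc ‖al * be‖ < ‖ga * de‖ * q := h.norm_mul_lt hq0 hq1 hzp
      _ ≤ ‖ga * de‖ * ((q ^ (1 - N : ℤ)) ^ 2 * q ^ (i + 1)) := by gcongr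
      _ = _ := by
        simp only [norm_mul, norm_zpow, Complex.norm_real, Real.norm_of_nonneg hq0.le]
        ring
  have hsum := summable_weightC_mul_abs_pow hq0 hq1 hzm hzp.ne' (h.1.mul_pos hq0 hq1 hzp).ne'
    (fun _ hx => (h.1.one_sub_mul_one_sub_pos hq0 hq1 hzp hx).ne')
    (fun _ hx => (h.2.1.one_sub_mul_zpow_pos hq0 hq1 hzp (1 - N) hx).ne') hcd
  refine (Complex.reCLM.summable hsum).congr fun x => ?_
  rw [Complex.reCLM_apply, Complex.re_mul_ofReal, wN]

theorem zwUnnorm_pos (h : AdmissibleNondeg q zm zp al be ga de) (hq0 : 0 < q) (hq1 : q < 1)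
    (hzm : zm ≠ 0) (hzp : 0 < zp) {N : ℕ} (X : Conf q zm zp N) :
    0 < zwUnnorm q zm zp al be ga de N X := by
  refine mul_pos (Finset.prod_pos fun i _ => ?_) (Finset.prod_pos fun p hp => ?_)
  · exact (Complex.pos_iff.mp (h.wN_pos hq0 hq1 hzm hzp N (X.2.2 i))).1
  · exact pow_pos (sub_pos.mpr (X.2.1 (Finset.mem_filter.mp hp).2)) 2

end AdmissibleNondeg

theorem summable_zwUnnorm {q zm zp : ℝ} {al be ga de : ℂ} {N : ℕ}
    (hmom : ∀ i ≤ 2 * N - 2, Summable fun x : Lambda q zm zp =>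
      (wN q al be ga de N x).re * |(x : ℝ)| ^ i) :
    Summable fun X : Conf q zm zp N => zwUnnorm q zm zp al be ga de N X := by
  let toPi : Conf q zm zp N → Fin N → Lambda q zm zp := fun X i => ⟨X.1 i, X.2.2 i⟩
  have hinj : Function.Injective toPi := fun X Y hXY =>
    Subtype.ext (funext fun i => congrArg Subtype.val (congrFun hXY i))
  exact ((summable_prod_mul_prod_sub_sq hmom).comp_injective hinj).congr fun X => rfl

theorem Conf.nonempty {q zm zp : ℝ} (hq0 : 0 < q) (hq1 : q < 1) (hzp : 0 < zp) (N : ℕ) :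
    Nonempty (Conf q zm zp N) :=
  ⟨fun i => zp * q ^ (-(i : ℤ)), fun i j hij => mul_lt_mul_of_pos_left
    (zpow_lt_zpow_right_of_lt_one₀ hq0 hq1 (by simpa using hij)) hzp, fun i => .inr ⟨-i, rfl⟩⟩

/-- For an admissible nondegenerate quadruple (α,β,γ,δ) and N ≥ 1, the sums
Σ_{x∈Λ} w_N(x)|x|^i (0 ≤ i ≤ 2N−2) are finite; consequently the normalizing constant
Z_N = Σ_{X∈𝔾_N} ∏ w_N(xᵢ) ∏_{i<j}(x_j−x_i)² is finite (and positive), so the q-zw-measure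
M_N is well defined. -/
theorem zw_measure_well_defined (q zm zp : ℝ) (hq0 : 0 < q) (hq1 : q < 1) (hzm : zm < 0)
    (hzp : 0 < zp) (al be ga de : ℂ) (hadm : AdmissibleNondeg q zm zp al be ga de)
    (N : ℕ) (hN : 1 ≤ N) :
    (∀ i : ℕ, i ≤ 2 * N - 2 →
      Summable (fun x : ↥(Lambda q zm zp) =>
        (wN q al be ga de N (x : ℝ)).re * |(x : ℝ)| ^ i)) ∧
    Summable (fun X : Conf q zm zp N => zwUnnorm q zm zp al be ga de N X) ∧
    0 < ZN q zm zp al be ga de N := by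
  have hmom : ∀ i ≤ 2 * N - 2, Summable fun x : Lambda q zm zp =>
      (wN q al be ga de N x).re * |(x : ℝ)| ^ i :=
    fun i hi => hadm.summable_wN_mul_abs_pow hq0 hq1 hzm.ne hzp (by lia)
  have hsum := summable_zwUnnorm hmom
  have hpos := hadm.zwUnnorm_pos hq0 hq1 hzm.ne hzp (N := N)
  obtain ⟨X⟩ := Conf.nonempty (zm := zm) hq0 hq1 hzp N
  exact ⟨hmom, hsum, hsum.tsum_pos (fun Y => (hpos Y).le) X (hpos X)⟩

end
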